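/- arXiv:1803.09676 — 4 statements merged into one kernel-verified Lean document; each statement's English description precedes it below -/
import Mathlib

section
/- Let E, F be real normed vector spaces, a_x, a_u class-𝒦 functions, and f : E → F → E satisfy ‖f(x¹,u) − f(x²,u)‖ ≤ a_x(‖x¹ − x²‖) and ‖f(x,u¹) − f(x,u²)‖ ≤ a_u(‖u¹ − u²‖) for all arguments. Let u : ℕ → F, let d : ℕ → F satisfy ‖d(j)‖ ≤ d̄ for all j, and let x, x̃ : ℕ → E be trajectories with x̃(0) = x(0), x(j+1) = f(x(j), u(j)) and x̃(j+1) = f(x̃(j), u(j) + d(j)). Then for every j ≥ 1, ‖x̃(j) − x(j)‖ ≤ β_{j−1}(d̄), where β_0(d) = a_u(d) and β_k(d) = a_u(d) + a_x(β_{k−1}(d)). -/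
open scoped NNReal

/-- A function `a : [0,∞) → [0,∞)` is of class 𝒦 if it is continuous,
strictly increasing, and satisfies `a 0 = 0`. -/
def IsClassK (a : ℝ≥0 → ℝ≥0) : Prop :=
  Continuous a ∧ StrictMono a ∧ a 0 = 0

/-- The sequence β_k defined by β_0 = a_u and β_k(d) = a_u(d) + a_x(β_{k-1}(d)). -/
def beta (au ax : ℝ≥0 → ℝ≥0) : ℕ → ℝ≥0 → ℝ≥0
  | 0, d => au d
  | k + 1, d => au d + ax (beta au ax k d)

theorem IsClassK.monotone {a : ℝ≥0 → ℝ≥0} (ha : IsClassK a) : Monotone a :=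
  ha.2.1.monotone

theorem le_beta_of_succ_le_add {au ax : ℝ≥0 → ℝ≥0} (hax : Monotone ax) {d : ℝ≥0} {e : ℕ → ℝ≥0}
    (h_zero : e 0 ≤ au d) (h_succ : ∀ k, e (k + 1) ≤ au d + ax (e k)) (k : ℕ) :
    e k ≤ beta au ax k d :=
  (hax.const_add (au d)).seq_le_seq (y := (beta au ax · d)) k h_zero
    (fun i _ ↦ h_succ i) fun _ _ ↦ le_rfl

section Trajectories

variable {X U : Type*} [PseudoMetricSpace X] [PseudoMetricSpace U]
  {ax au : ℝ≥0 → ℝ≥0} {f : X → U → X}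

theorem nndist_apply_apply_le_add
    (hfx : ∀ x₁ x₂ u, nndist (f x₁ u) (f x₂ u) ≤ ax (nndist x₁ x₂))
    (hfu : ∀ x u₁ u₂, nndist (f x u₁) (f x u₂) ≤ au (nndist u₁ u₂))
    (x₁ x₂ : X) (u₁ u₂ : U) :
    nndist (f x₁ u₁) (f x₂ u₂) ≤ au (nndist u₁ u₂) + ax (nndist x₁ x₂) :=
  calc
    nndist (f x₁ u₁) (f x₂ u₂)
        ≤ nndist (f x₁ u₁) (f x₁ u₂) + nndist (f x₁ u₂) (f x₂ u₂) := nndist_triangle _ _ _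
    _ ≤ au (nndist u₁ u₂) + ax (nndist x₁ x₂) := add_le_add (hfu _ _ _) (hfx _ _ _)

theorem perturbed_trajectory_bound_general (hax : Monotone ax) (hau : Monotone au)
    (hfx : ∀ x₁ x₂ u, nndist (f x₁ u) (f x₂ u) ≤ ax (nndist x₁ x₂))
    (hfu : ∀ x u₁ u₂, nndist (f x u₁) (f x u₂) ≤ au (nndist u₁ u₂))
    {u ut : ℕ → U} {δ : ℝ≥0} (hu : ∀ j, nndist (ut j) (u j) ≤ δ)
    {x xt : ℕ → X} (h0 : xt 0 = x 0)
    (hx : ∀ j, x (j + 1) = f (x j) (u j)) (hxt : ∀ j, xt (j + 1) = f (xt j) (ut j)) (k : ℕ) :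
    nndist (xt (k + 1)) (x (k + 1)) ≤ beta au ax k δ := by
  refine le_beta_of_succ_le_add (e := fun k ↦ nndist (xt (k + 1)) (x (k + 1))) hax ?_ (fun k ↦ ?_) k
  · calc
      nndist (xt 1) (x 1) = nndist (f (x 0) (ut 0)) (f (x 0) (u 0)) := by rw [hxt, hx, h0]
      _ ≤ au (nndist (ut 0) (u 0)) := hfu _ _ _
      _ ≤ au δ := hau (hu 0)
  · calc
      nndist (xt (k + 2)) (x (k + 2))
          = nndist (f (xt (k + 1)) (ut (k + 1))) (f (x (k + 1)) (u (k + 1))) := by rw [hxt, hx]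
      _ ≤ au (nndist (ut (k + 1)) (u (k + 1))) + ax (nndist (xt (k + 1)) (x (k + 1))) :=
        nndist_apply_apply_le_add hfx hfu _ _ _ _
      _ ≤ au δ + ax (nndist (xt (k + 1)) (x (k + 1))) := by gcongr; exact hau (hu _)

end Trajectories

/-- the deviation of the input-disturbed trajectory from the nominal
one is bounded by β_{j-1}(d̄) at every time j ≥ 1. -/
theorem perturbed_trajectory_bound {E F : Type*}
    [NormedAddCommGroup E] [NormedSpace ℝ E] [NormedAddCommGroup F] [NormedSpace ℝ F]
    (ax au : ℝ≥0 → ℝ≥0) (hax : IsClassK ax) (hau : IsClassK au)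
    (f : E → F → E)
    (hfx : ∀ (x1 x2 : E) (u : F), ‖f x1 u - f x2 u‖₊ ≤ ax ‖x1 - x2‖₊)
    (hfu : ∀ (x : E) (u1 u2 : F), ‖f x u1 - f x u2‖₊ ≤ au ‖u1 - u2‖₊)
    (u d : ℕ → F) (dbar : ℝ≥0) (hd : ∀ j, ‖d j‖₊ ≤ dbar)
    (x xt : ℕ → E) (h0 : xt 0 = x 0)
    (hx : ∀ j, x (j + 1) = f (x j) (u j))
    (hxt : ∀ j, xt (j + 1) = f (xt j) (u j + d j)) :
    ∀ j : ℕ, 1 ≤ j → ‖xt j - x j‖₊ ≤ beta au ax (j - 1) dbar := by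
  intro j hj
  obtain ⟨k, rfl⟩ := Nat.exists_eq_add_of_le' hj
  simp only [← nndist_eq_nnnorm_sub] at hfx hfu ⊢
  exact perturbed_trajectory_bound_general hax.monotone hau.monotone hfx hfu
    (fun j ↦ by simpa only [nndist_eq_nnnorm_sub, add_sub_cancel_left] using hd j) h0 hx hxt k
end

section
/- Let E, F be real normed vector spaces, a_x, a_u class-𝒦 functions, and f : E → F → E satisfy ‖f(x¹,u) − f(x²,u)‖ ≤ a_x(‖x¹ − x²‖) and ‖f(x,u¹) − f(x,u²)‖ ≤ a_u(‖u¹ − u²‖) for all arguments. Let X_f ⊆ E be nonempty, let k_f ≥ 1, let u : ℕ → F, and let the nominal trajectory x(j+1) = f(x(j), u(j)) satisfy x(k_f) ∈ X_f. Let d : ℕ → F with ‖d(j)‖ ≤ d̄ and let x̃ be the perturbed trajectory with x̃(0) = x(0) and x̃(j+1) = f(x̃(j), u(j) + d(j)). Then the distance from x̃(k_f) to the set X_f satisfies Δ(x̃(k_f), X_f) ≤ β_{k_f−1}(d̄), where Δ(x, X) = inf_{y∈X} ‖x − y‖ and β_0(d) = a_u(d), β_k(d) = a_u(d) + a_x(β_{k−1}(d)).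 -/
/-!
The perturbed and nominal states start together, so after one step they differ only through the
input, by at most `a_u(d̄) = β₀(d̄)`. Each later step goes through the intermediate state
`f (x̃ j) (u j)`: the input error adds at most `a_u(d̄)` and the old state error `e` at most
`a_x(e)`, which is the recursion defining `β`. The nominal endpoint lies in `X_f`, so the
distance to it bounds the distance to `X_f`.
-/

open scoped NNReal

section PseudoMetricSpace

variable {E F : Type*} [PseudoMetricSpace E] [PseudoMetricSpace F] {ax au : ℝ≥0 → ℝ≥0}
  {f : E → F → E}

theorem nndist_map_le_add (hax : Monotone ax) (hau : Monotone au)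
    (hfx : ∀ x₁ x₂ u, nndist (f x₁ u) (f x₂ u) ≤ ax (nndist x₁ x₂))
    (hfu : ∀ x u₁ u₂, nndist (f x u₁) (f x u₂) ≤ au (nndist u₁ u₂))
    {x₁ x₂ : E} {u₁ u₂ : F} {ε δ : ℝ≥0} (hx : nndist x₁ x₂ ≤ ε) (hu : nndist u₁ u₂ ≤ δ) :
    nndist (f x₁ u₁) (f x₂ u₂) ≤ au δ + ax ε :=
  calc
    nndist (f x₁ u₁) (f x₂ u₂)
        ≤ nndist (f x₁ u₁) (f x₁ u₂) + nndist (f x₁ u₂) (f x₂ u₂) := nndist_triangle _ _ _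
    _ ≤ au (nndist u₁ u₂) + ax (nndist x₁ x₂) := add_le_add (hfu _ _ _) (hfx _ _ _)
    _ ≤ au δ + ax ε := add_le_add (hau hu) (hax hx)

theorem nndist_trajectory_succ_le_beta (hax : Monotone ax) (hau : Monotone au)
    (hfx : ∀ x₁ x₂ u, nndist (f x₁ u) (f x₂ u) ≤ ax (nndist x₁ x₂))
    (hfu : ∀ x u₁ u₂, nndist (f x u₁) (f x u₂) ≤ au (nndist u₁ u₂))
    {u ut : ℕ → F} {δ : ℝ≥0} (hu : ∀ j, nndist (ut j) (u j) ≤ δ)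
    {x xt : ℕ → E} (h0 : xt 0 = x 0) (hx : ∀ j, x (j + 1) = f (x j) (u j))
    (hxt : ∀ j, xt (j + 1) = f (xt j) (ut j)) (k : ℕ) :
    nndist (xt (k + 1)) (x (k + 1)) ≤ beta au ax k δ := by
  induction k with
  | zero =>
    rw [hxt, hx, h0]
    exact (hfu _ _ _).trans (hau (hu 0))
  | succ k ih =>
    rw [hxt (k + 1), hx (k + 1)]
    exact nndist_map_le_add hax hau hfx hfu ih (hu (k + 1))

theorem perturbed_terminal_distance_bound_general (hax : Monotone ax) (hau : Monotone au)
    (hfx : ∀ x₁ x₂ u, nndist (f x₁ u) (f x₂ u) ≤ ax (nndist x₁ x₂))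
    (hfu : ∀ x u₁ u₂, nndist (f x u₁) (f x u₂) ≤ au (nndist u₁ u₂))
    {u ut : ℕ → F} {δ : ℝ≥0} (hu : ∀ j, nndist (ut j) (u j) ≤ δ)
    {x xt : ℕ → E} (h0 : xt 0 = x 0) (hx : ∀ j, x (j + 1) = f (x j) (u j))
    (hxt : ∀ j, xt (j + 1) = f (xt j) (ut j))
    {Xf : Set E} {k : ℕ} (hterm : x (k + 1) ∈ Xf) :
    Metric.infNndist (xt (k + 1)) Xf ≤ beta au ax k δ :=
  calc
    Metric.infNndist (xt (k + 1)) Xf ≤ nndist (xt (k + 1)) (x (k + 1)) :=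
      NNReal.coe_le_coe.mp (Metric.infDist_le_dist_of_mem hterm)
    _ ≤ beta au ax k δ := nndist_trajectory_succ_le_beta hax hau hfx hfu hu h0 hx hxt k

end PseudoMetricSpace

/-- if the nominal trajectory reaches the terminal set `X_f` at time `k_f`,
then the distance of the input-disturbed trajectory to `X_f` at time `k_f` is bounded
by β_{k_f-1}(d̄). -/
theorem perturbed_terminal_distance_bound {E F : Type*}
    [NormedAddCommGroup E] [NormedSpace ℝ E] [NormedAddCommGroup F] [NormedSpace ℝ F]
    (ax au : ℝ≥0 → ℝ≥0) (hax : IsClassK ax) (hau : IsClassK au)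
    (f : E → F → E)
    (hfx : ∀ (x1 x2 : E) (u : F), ‖f x1 u - f x2 u‖₊ ≤ ax ‖x1 - x2‖₊)
    (hfu : ∀ (x : E) (u1 u2 : F), ‖f x u1 - f x u2‖₊ ≤ au ‖u1 - u2‖₊)
    (Xf : Set E) (hXf : Xf.Nonempty) (kf : ℕ) (hkf : 1 ≤ kf)
    (u d : ℕ → F) (dbar : ℝ≥0) (hd : ∀ j, ‖d j‖₊ ≤ dbar)
    (x xt : ℕ → E) (h0 : xt 0 = x 0)
    (hx : ∀ j, x (j + 1) = f (x j) (u j))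
    (hterm : x kf ∈ Xf)
    (hxt : ∀ j, xt (j + 1) = f (xt j) (u j + d j)) :
    Metric.infNndist (xt kf) Xf ≤ beta au ax (kf - 1) dbar := by
  obtain ⟨k, rfl⟩ := Nat.exists_eq_add_of_le' hkf
  exact perturbed_terminal_distance_bound_general hax.2.1.monotone hau.2.1.monotone
    (by simpa only [nndist_eq_nnnorm] using hfx) (by simpa only [nndist_eq_nnnorm] using hfu)
    (by simpa only [nndist_eq_nnnorm, add_sub_cancel_left] using hd) h0 hx hxt hterm
end

section
/- Let E, F be real normed vector spaces, f : E → F → E, and let U_c ⊆ F, X_c ⊆ E, X_f ⊆ E be constraint sets. Let L ≥ 1 and k_f be natural numbers with L dividing k_f, and let 0 ≤ k ≤ k_f − 2. Suppose the blocked input sequence v is feasible for the shrinking-horizon FHOCP at (x, k). Then: if L does not divide k + 1, the same sequence v is feasible at (f(x, v(1)), k+1); and if L divides k + 1, the shifted sequence v′(i) = v(i+1) is feasible at (f(x, v(1)), k+1). -/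
/-- The blocking index b(j,k) = ⌊(j + k − ⌊k/L⌋·L)/L⌋ + 1. -/
def bIdx (L j k : ℕ) : ℕ := (j + k - k / L * L) / L + 1

/-- The number of free (blocked) input values N(k) = ⌈(k_f − k)/L⌉. -/
def Nfree (L kf k : ℕ) : ℕ := (kf - k + L - 1) / L

/-- The nominal blocked-input trajectory x(j|k) from state x at time k:
x(0|k) = x and x(j+1|k) = f(x(j|k), v(b(j,k))). -/
def traj {E F : Type*} (f : E → F → E) (L : ℕ) (v : ℕ → F) (x : E) (k : ℕ) : ℕ → E
  | 0 => x
  | j + 1 => f (traj f L v x k j) (v (bIdx L j k))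

/-- A blocked input sequence v is feasible for the shrinking-horizon FHOCP at (x, k):
v(i) ∈ U_c for i = 1,…,N(k), the trajectory satisfies x(j|k) ∈ X_c for
j = 1,…,k_f − k, and x(k_f − k|k) ∈ X_f. -/
def Feasible {E F : Type*} (f : E → F → E) (Uc : Set F) (Xc Xf : Set E)
    (L kf : ℕ) (v : ℕ → F) (x : E) (k : ℕ) : Prop :=
  (∀ i, 1 ≤ i → i ≤ Nfree L kf k → v i ∈ Uc) ∧
  (∀ j, 1 ≤ j → j ≤ kf - k → traj f L v x k j ∈ Xc) ∧
  traj f L v x k (kf - k) ∈ Xf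

/-!
Since `b(j,k) = ⌊(j + k)/L⌋ - ⌊k/L⌋ + 1`, restarting the clock at `k + s` lowers the blocking index
by exactly `⌊(k + s)/L⌋ - ⌊k/L⌋`, the number of block boundaries crossed between `k` and `k + s`.
Shifting `v` by this amount reproduces the inputs of the original plan, hence the tail of its
trajectory, whose constraints are already known. When `L ∣ k_f` the number of free inputs is
`N(k) = k_f/L - ⌊k/L⌋`, which drops by the same amount, so the shifted sequence only reads values
of `v` that are known to be admissible. A single step crosses one boundary if `L ∣ k + 1` and none
otherwise.
-/

theorem bIdx_eq_div_sub_div_add_one (L j k : ℕ) : bIdx L j k = (j + k) / L - k / L + 1 := by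
  rw [bIdx, Nat.mul_comm, Nat.sub_mul_div]

theorem bIdx_zero (L k : ℕ) : bIdx L 0 k = 1 := by
  rw [bIdx_eq_div_sub_div_add_one, Nat.zero_add, Nat.sub_self]

theorem bIdx_add_left (L s j k : ℕ) :
    bIdx L (s + j) k = bIdx L j (k + s) + ((k + s) / L - k / L) := by
  have hk : k / L ≤ (k + s) / L := Nat.div_le_div_right (Nat.le_add_right k s)
  have hj : (k + s) / L ≤ (j + (k + s)) / L := Nat.div_le_div_right (Nat.le_add_left _ j)
  rw [bIdx_eq_div_sub_div_add_one, bIdx_eq_div_sub_div_add_one,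
    show s + j + k = j + (k + s) by ring]
  omega

theorem nfree_eq_div_sub_div {L kf k : ℕ} (hL : 1 ≤ L) (hdvd : L ∣ kf) (hk : k ≤ kf) :
    Nfree L kf k = kf / L - k / L := by
  obtain ⟨m, rfl⟩ := hdvd
  have hnum : L * m - k + L - 1 = L * (m + 1) - (k + 1) := by rw [Nat.mul_succ]; omega
  have hlt : k < L * (m + 1) := by rw [Nat.mul_succ]; omega
  rw [Nfree, hnum, Nat.mul_sub_div k L (m + 1) hlt, Nat.add_sub_add_right,
    Nat.mul_div_cancel_left m hL]

theorem nfree_add_right {L kf k s : ℕ} (hL : 1 ≤ L) (hdvd : L ∣ kf) (hs : k + s ≤ kf) :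
    Nfree L kf (k + s) + ((k + s) / L - k / L) = Nfree L kf k := by
  rw [nfree_eq_div_sub_div hL hdvd hs, nfree_eq_div_sub_div hL hdvd (by omega)]
  exact Nat.sub_add_sub_cancel (Nat.div_le_div_right hs)
    (Nat.div_le_div_right (Nat.le_add_right k s))

theorem traj_add {E F : Type*} (f : E → F → E) (L : ℕ) (v : ℕ → F) (x : E) (k s j : ℕ) :
    traj f L v x k (s + j) =
      traj f L (fun i => v (i + ((k + s) / L - k / L))) (traj f L v x k s) (k + s) j := by
  induction j with
  | zero => rfl
  | succ j ih => exact congrArg₂ f ih (congrArg v (bIdx_add_left L s j k))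

theorem traj_one {E F : Type*} (f : E → F → E) (L : ℕ) (v : ℕ → F) (x : E) (k : ℕ) :
    traj f L v x k 1 = f x (v 1) := by
  rw [traj, traj, bIdx_zero]

theorem feasible_step_general {E F : Type*} {f : E → F → E} {Uc : Set F} {Xc Xf : Set E}
    {L kf k s : ℕ} {v : ℕ → F} {x : E} (hL : 1 ≤ L) (hdvd : L ∣ kf) (hs : k + s ≤ kf)
    (hfeas : Feasible f Uc Xc Xf L kf v x k) :
    Feasible f Uc Xc Xf L kf (fun i => v (i + ((k + s) / L - k / L)))
      (traj f L v x k s) (k + s) := by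
  obtain ⟨hinput, hstate, hterminal⟩ := hfeas
  refine ⟨fun i hi hiN => ?_, fun j hj hjk => ?_, ?_⟩
  · apply hinput _ (Nat.le_add_right_of_le hi)
    rw [← nfree_add_right hL hdvd hs]
    exact Nat.add_le_add_right hiN _
  · rw [← traj_add]
    exact hstate (s + j) (by omega) (by omega)
  · rwa [← traj_add, show s + (kf - (k + s)) = kf - k by omega]

/-- recursive feasibility step. If v is feasible at (x, k) with
0 ≤ k ≤ k_f − 2, then v itself (if L ∤ k+1), resp. the shifted sequence
v′(i) = v(i+1) (if L ∣ k+1), is feasible at (f(x, v(1)), k+1). -/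
theorem feasible_step {E F : Type*}
    [NormedAddCommGroup E] [NormedSpace ℝ E] [NormedAddCommGroup F] [NormedSpace ℝ F]
    (f : E → F → E) (Uc : Set F) (Xc Xf : Set E)
    (L kf : ℕ) (hL : 1 ≤ L) (hdvd : L ∣ kf)
    (k : ℕ) (hk : k + 2 ≤ kf)
    (v : ℕ → F) (x : E) (hfeas : Feasible f Uc Xc Xf L kf v x k) :
    (¬ L ∣ (k + 1) → Feasible f Uc Xc Xf L kf v (f x (v 1)) (k + 1)) ∧
    (L ∣ (k + 1) → Feasible f Uc Xc Xf L kf (fun i => v (i + 1)) (f x (v 1)) (k + 1)) := by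
  have hstep := feasible_step_general (s := 1) hL hdvd (by omega) hfeas
  rw [traj_one] at hstep
  exact ⟨fun h => by simpa [Nat.succ_div_of_not_dvd h] using hstep,
    fun h => by simpa [Nat.succ_div_of_dvd h] using hstep⟩
end

section
/- (Proposition 1, recursive feasibility and finite-time convergence of nominal SBPC.) Let E, F be real normed vector spaces, f : E → F → E, and let U_c ⊆ F, X_c ⊆ E, X_f ⊆ E be constraint sets. Let L ≥ 1 and k_f ≥ 1 with L dividing k_f, and suppose the shrinking-horizon FHOCP is feasible at (x₀, 0). Then there exist an input sequence u(0),…,u(k_f−1) and a trajectory x(0) = x₀, x(k+1) = f(x(k), u(k)), such that for every k = 0,…,k_f−1 there is a blocked input sequence v_k feasible for the shrinking-horizon FHOCP at (x(k), k) with u(k) = v_k(1), and the terminal state satisfies x(k_f) ∈ X_f. -/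
/-!
Applying in open loop a sequence that is feasible at time `0` already works. Block boundaries stay
fixed at the multiples of `L`, so at time `k` what is left of the sequence is again a blocked
sequence, obtained by discarding the `⌊k/L⌋` completed blocks. It predicts the remainder of the
original trajectory and therefore inherits every constraint, and its first value is the input in
force at time `k`.
-/

/-- The blocked input sequence still to be applied at time `k` when `v` was planned at time `0`.
Values are numbered from `1`, as in `Feasible`, so discarding the `⌊k/L⌋` completed blocks is an
index shift. -/
def blockTail {F : Type*} (L k : ℕ) (v : ℕ → F) : ℕ → F :=
  fun i => v (i + k / L)

lemma bIdx_zero_right (L j : ℕ) : bIdx L j 0 = j / L + 1 := by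
  simp only [bIdx, Nat.zero_div, zero_mul, add_zero, Nat.sub_zero]

lemma bIdx_add_div (L j k : ℕ) : bIdx L j k + k / L = (k + j) / L + 1 := by
  have completed_le : k / L ≤ (k + j) / L := Nat.div_le_div_right (Nat.le_add_right k j)
  calc bIdx L j k + k / L
      = (k + j - L * (k / L)) / L + 1 + k / L := by rw [bIdx, add_comm j k, mul_comm L]
    _ = (k + j) / L - k / L + 1 + k / L := by rw [Nat.sub_mul_div]
    _ = (k + j) / L + 1 := by omega

/-- The comparison is with `N(0)` because `N(k) + ⌊k/L⌋` is not monotone in `k`: for `L = 2` and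
`k_f = 3` it takes the values `2, 1, 2` at `k = 0, 1, 2`. -/
lemma Nfree_add_div_le {L kf k : ℕ} (hL : 1 ≤ L) (hk : k ≤ kf) :
    Nfree L kf k + k / L ≤ Nfree L kf 0 :=
  calc (kf - k + L - 1) / L + k / L
      ≤ (kf - k + L - 1 + k) / L := Nat.div_add_div_le_add_div
    _ = (kf - 0 + L - 1) / L := by congr 1; omega

section Tail

variable {E F : Type*}

lemma blockTail_bIdx (L j k : ℕ) (v : ℕ → F) :
    blockTail L k v (bIdx L j k) = v (bIdx L (k + j) 0) := by
  rw [blockTail, bIdx_add_div, bIdx_zero_right]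

lemma blockTail_one (L k : ℕ) (v : ℕ → F) : blockTail L k v 1 = v (bIdx L k 0) := by
  rw [blockTail, bIdx_zero_right, add_comm]

lemma traj_blockTail (f : E → F → E) (L : ℕ) (v : ℕ → F) (x : E) (k j : ℕ) :
    traj f L (blockTail L k v) (traj f L v x 0 k) k j = traj f L v x 0 (k + j) := by
  induction j with
  | zero => rfl
  | succ j ih =>
    calc f (traj f L (blockTail L k v) (traj f L v x 0 k) k j) (blockTail L k v (bIdx L j k))
        = f (traj f L v x 0 (k + j)) (v (bIdx L (k + j) 0)) := by rw [ih, blockTail_bIdx]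
      _ = traj f L v x 0 (k + (j + 1)) := rfl

lemma Feasible.blockTail {f : E → F → E} {Uc : Set F} {Xc Xf : Set E} {L kf k : ℕ} {v : ℕ → F}
    {x : E} (hL : 1 ≤ L) (hk : k ≤ kf) (hv : Feasible f Uc Xc Xf L kf v x 0) :
    Feasible f Uc Xc Xf L kf (blockTail L k v) (traj f L v x 0 k) k := by
  obtain ⟨inputs_mem, states_mem, terminal_mem⟩ := hv
  refine ⟨fun i one_le_i i_le => ?_, fun j one_le_j j_le => ?_, ?_⟩
  · have shifted_le : i + k / L ≤ Nfree L kf 0 :=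
      (Nat.add_le_add_right i_le _).trans (Nfree_add_div_le hL hk)
    exact inputs_mem (i + k / L) (Nat.le_add_right_of_le one_le_i) shifted_le
  · rw [traj_blockTail]
    exact states_mem (k + j) (by omega) (by omega)
  · rw [traj_blockTail, Nat.add_sub_cancel' hk]
    exact terminal_mem

end Tail

theorem nominal_SBPC_convergence_general {E F : Type*} (f : E → F → E) (Uc : Set F)
    (Xc Xf : Set E) (L kf : ℕ) (hL : 1 ≤ L) (x0 : E)
    (hfeas0 : ∃ v : ℕ → F, Feasible f Uc Xc Xf L kf v x0 0) :
    ∃ (u : ℕ → F) (x : ℕ → E),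
      x 0 = x0 ∧
      (∀ k < kf, x (k + 1) = f (x k) (u k)) ∧
      (∀ k < kf, ∃ v : ℕ → F, Feasible f Uc Xc Xf L kf v (x k) k ∧ u k = v 1) ∧
      x kf ∈ Xf := by
  obtain ⟨v, hv⟩ := hfeas0
  have terminal_mem : traj f L v x0 0 kf ∈ Xf := hv.2.2
  refine ⟨fun k => v (bIdx L k 0), traj f L v x0 0, rfl, fun _ _ => rfl, fun k hk => ?_,
    terminal_mem⟩
  exact ⟨blockTail L k v, hv.blockTail hL hk.le, (blockTail_one L k v).symm⟩

/-- Proposition 1: recursive feasibility and finite-time convergence of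
nominal SBPC. If the shrinking-horizon FHOCP is feasible at (x₀, 0), then there exist
an input sequence and a closed-loop trajectory starting at x₀ such that at every time
k = 0,…,k_f − 1 some blocked sequence v_k is feasible at (x(k), k) with u(k) = v_k(1),
and the terminal state satisfies x(k_f) ∈ X_f. -/
theorem nominal_SBPC_convergence {E F : Type*}
    [NormedAddCommGroup E] [NormedSpace ℝ E] [NormedAddCommGroup F] [NormedSpace ℝ F]
    (f : E → F → E) (Uc : Set F) (Xc Xf : Set E)
    (L kf : ℕ) (hL : 1 ≤ L) (hkf : 1 ≤ kf) (hdvd : L ∣ kf)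
    (x0 : E) (hfeas0 : ∃ v : ℕ → F, Feasible f Uc Xc Xf L kf v x0 0) :
    ∃ (u : ℕ → F) (x : ℕ → E),
      x 0 = x0 ∧
      (∀ k < kf, x (k + 1) = f (x k) (u k)) ∧
      (∀ k < kf, ∃ v : ℕ → F, Feasible f Uc Xc Xf L kf v (x k) k ∧ u k = v 1) ∧
      x kf ∈ Xf :=
  nominal_SBPC_convergence_general f Uc Xc Xf L kf hL x0 hfeas0
end
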